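/- arXiv:2601.10237 — 2 statements merged into one kernel-verified Lean document; each statement's English description precedes it below -/
import Mathlib

section
/- Let M ≥ 2 be an integer and let σ be a real with 0 < σ ≤ 1/√(2·ln M). Define a* := 1 − Φ(1/σ)^M and ε_M := 2/(M·√(4π·ln M)). Then ((1 − a*) − (1/2)·(1 − a*)^{(M−1)/M})/√2 ≥ (1/√8)·(1 − 1/√(4π·ln M))·(1 − ε_M). -/
open MeasureTheory Real

/-- The standard normal cumulative distribution function
`Φ(x) = (1/√(2π)) ∫_{−∞}^x e^{−t²/2} dt`. -/
noncomputable def stdNormalCDF (x : ℝ) : ℝ :=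
  ∫ t in Set.Iic x, Real.exp (-t ^ 2 / 2) / Real.sqrt (2 * Real.pi)

lemma gauss_integrable : Integrable (fun t : ℝ => Real.exp (-t ^ 2 / 2)) := by
  have h := integrable_exp_neg_mul_sq (b := 1 / 2) (by norm_num)
  refine h.congr (Filter.Eventually.of_forall fun t => ?_)
  simp only
  congr 1
  ring

lemma gauss_total : ∫ t : ℝ, Real.exp (-t ^ 2 / 2) = Real.sqrt (2 * Real.pi) := by
  have h := integral_gaussian (1 / 2)
  rw [show (2 : ℝ) * Real.pi = Real.pi / (1 / 2) by ring, ← h]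
  congr 1
  funext t
  congr 1
  ring

lemma mills (x : ℝ) (hx : 0 < x) :
    ∫ t in Set.Ioi x, Real.exp (-t ^ 2 / 2) ≤ Real.exp (-x ^ 2 / 2) / x := by
  have hd : ∀ t : ℝ, HasDerivAt (fun t : ℝ => -(Real.exp (-t ^ 2 / 2))) (t * Real.exp (-t ^ 2 / 2)) t := by
    intro t
    have h1 : HasDerivAt (fun t : ℝ => -t ^ 2 / 2) (-t) t := by
      have := ((hasDerivAt_pow 2 t).neg).div_const 2
      refine this.congr_deriv ?_
      norm_num
      ring
    refine h1.exp.neg.congr_deriv ?_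
    ring
  have ht : Filter.Tendsto (fun t : ℝ => -(Real.exp (-t ^ 2 / 2))) Filter.atTop (nhds 0) := by
    rw [← neg_zero]
    refine Filter.Tendsto.neg ?_
    refine Real.tendsto_exp_atBot.comp ?_
    have h2 : Filter.Tendsto (fun t : ℝ => t ^ 2 / 2) Filter.atTop Filter.atTop :=
      (Filter.tendsto_pow_atTop (by norm_num)).atTop_div_const (by norm_num)
    refine (Filter.tendsto_neg_atTop_atBot.comp h2).congr fun t => ?_
    simp only [Function.comp]
    ring
  have hpos : ∀ t ∈ Set.Ioi x, 0 ≤ t * Real.exp (-t ^ 2 / 2) := fun t h =>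
    mul_nonneg (hx.trans h).le (Real.exp_pos _).le
  have hint := integrableOn_Ioi_deriv_of_nonneg' (fun t _ => hd t) hpos ht
  have heq := integral_Ioi_of_hasDerivAt_of_tendsto' (fun t _ => hd t) hint ht
  have hle : ∫ t in Set.Ioi x, Real.exp (-t ^ 2 / 2) ≤
      ∫ t in Set.Ioi x, (t * Real.exp (-t ^ 2 / 2)) / x := by
    refine setIntegral_mono_on gauss_integrable.integrableOn (hint.div_const x) measurableSet_Ioi ?_
    intro t h
    rw [le_div_iff₀ hx, mul_comm]
    exact mul_le_mul_of_nonneg_right (le_of_lt h) (Real.exp_pos _).le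
  rw [integral_div, heq] at hle
  simpa using hle

lemma cdf_lower (x : ℝ) (hx : 0 < x) :
    1 - Real.exp (-x ^ 2 / 2) / x / Real.sqrt (2 * Real.pi) ≤ stdNormalCDF x := by
  have hs : 0 < Real.sqrt (2 * Real.pi) := Real.sqrt_pos.mpr (by positivity)
  unfold stdNormalCDF
  rw [integral_div, le_div_iff₀ hs, sub_mul, div_mul_cancel₀ _ hs.ne', one_mul, ← gauss_total,
    ← intervalIntegral.integral_Iic_add_Ioi (b := x) gauss_integrable.integrableOn
      gauss_integrable.integrableOn]
  linarith [mills x hx]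

/-- analytic content of Theorem 6.1: for `M ≥ 2` and
`0 < σ ≤ 1/√(2 ln M)`, with `a* = 1 − Φ(1/σ)^M` and `ε_M = 2/(M √(4π ln M))`,
the pointwise separation `((1−a*) − (1/2)(1−a*)^{(M−1)/M})/√2` is at least
`(1/√8)(1 − 1/√(4π ln M))(1 − ε_M)`. -/
theorem shuffled_separation_lower_bound
    (M : ℕ) (hM : 2 ≤ M) (σ : ℝ) (hσ0 : 0 < σ)
    (hσ : σ ≤ 1 / Real.sqrt (2 * Real.log M))
    (astar εM : ℝ)
    (hastar : astar = 1 - stdNormalCDF (1 / σ) ^ M)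
    (hεM : εM = 2 / (M * Real.sqrt (4 * Real.pi * Real.log M))) :
    ((1 - astar) - (1 / 2) * (1 - astar) ^ (((M : ℝ) - 1) / M)) / Real.sqrt 2
      ≥ (1 / Real.sqrt 8) * (1 - 1 / Real.sqrt (4 * Real.pi * Real.log M)) * (1 - εM) := by
  have hM' : (2 : ℝ) ≤ M := by exact_mod_cast hM
  have hM0 : (0 : ℝ) < M := by linarith
  have hL : 0.69 < Real.log M := by
    have := Real.log_two_gt_d9
    have := Real.log_le_log (by norm_num) hM'
    linarith
  set L := Real.log M with hLdef
  have hpi := Real.pi_gt_three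
  have hS1 : 1 < Real.sqrt (4 * Real.pi * L) := by
    rw [Real.lt_sqrt (by norm_num)]
    nlinarith
  set S := Real.sqrt (4 * Real.pi * L) with hS
  set u := 1 / S with hu
  have hu0 : 0 < u := by positivity
  have hu1 : u < 1 := by rw [hu, div_lt_one (by linarith)]; exact hS1
  have hε : εM = 2 * (u / M) := by
    rw [hεM, hu]; field_simp
  have hr : 0 < Real.sqrt (2 * L) := Real.sqrt_pos.mpr (by linarith)
  have hx : Real.sqrt (2 * L) ≤ 1 / σ := by
    rw [le_div_iff₀ hσ0]
    rw [le_div_iff₀ hr] at hσ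
    linarith
  have hx0 : 0 < 1 / σ := by positivity
  have hcdf := cdf_lower (1 / σ) hx0
  set x := 1 / σ with hxdef
  set p := stdNormalCDF x with hp
  have hexp : Real.exp (-x ^ 2 / 2) ≤ 1 / M := by
    have h1 : 2 * L ≤ x ^ 2 := by
      rw [← Real.sq_sqrt (show 0 ≤ 2 * L by linarith)]
      exact pow_le_pow_left₀ hr.le hx 2
    calc Real.exp (-x ^ 2 / 2) ≤ Real.exp (-L) := Real.exp_le_exp.mpr (by linarith)
      _ = 1 / M := by rw [Real.exp_neg, hLdef, Real.exp_log hM0, one_div]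
  have htail : Real.exp (-x ^ 2 / 2) / x / Real.sqrt (2 * Real.pi) ≤ u / M := by
    have h2 : S = Real.sqrt (2 * L) * Real.sqrt (2 * Real.pi) := by
      rw [hS, ← Real.sqrt_mul (by linarith)]; congr 1; ring
    have h3 : u / M = 1 / M / Real.sqrt (2 * L) / Real.sqrt (2 * Real.pi) := by
      rw [hu, h2, div_div, div_div, div_div]; congr 1; ring
    rw [h3]
    gcongr
  have hv : u / M ≤ 1 / 2 := by
    rw [div_le_iff₀ hM0]; linarith
  have hpl : 1 - u / M ≤ p := by linarith
  have hp0 : 0 < p := by linarith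
  have hrpow : (p ^ M) ^ (((M : ℝ) - 1) / M) = p ^ (M - 1) := by
    rw [← Real.rpow_natCast p M, ← Real.rpow_mul hp0.le, mul_div_cancel₀ _ hM0.ne',
      ← Real.rpow_natCast p (M - 1), Nat.cast_sub (by omega)]
    simp
  have hpow : p ^ M = p ^ (M - 1) * p := by
    rw [← pow_succ]; congr 1; omega
  have hbern : 1 - u ≤ p ^ (M - 1) := by
    have h1 := one_add_mul_le_pow (a := -(u / M)) (by linarith) (M - 1)
    have h2 : (1 + -(u / M)) ^ (M - 1) ≤ p ^ (M - 1) :=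
      pow_le_pow_left₀ (by linarith) (by linarith) _
    have h3 : ((M - 1 : ℕ) : ℝ) = M - 1 := by rw [Nat.cast_sub (by omega)]; simp
    rw [h3] at h1
    have h4 : (M : ℝ) * (u / M) = u := by field_simp
    have h5 : 0 < u / M := by positivity
    nlinarith
  have hs8 : Real.sqrt 8 = 2 * Real.sqrt 2 := by
    rw [show (8 : ℝ) = 2 ^ 2 * 2 by norm_num, Real.sqrt_mul (by norm_num),
      Real.sqrt_sq (by norm_num)]
  have h2p : 0 < Real.sqrt 2 := by positivity
  rw [hastar, sub_sub_cancel, hrpow, hpow, hs8, hε, ge_iff_le, le_div_iff₀ h2p]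
  have hmain : (1 - u) * (1 - 2 * (u / M)) ≤ p ^ (M - 1) * (2 * p - 1) :=
    mul_le_mul hbern (by linarith) (by linarith) (by positivity)
  calc 1 / (2 * Real.sqrt 2) * (1 - u) * (1 - 2 * (u / M)) * Real.sqrt 2
      = (1 - u) * (1 - 2 * (u / M)) / 2 := by field_simp
    _ ≤ _ := by linarith
end

section
/- For μ > 0, define the Gaussian trade-off function G_μ : [0,1] → [0,1] by G_μ(α) = Φ(Φ⁻¹(1−α) − μ) (extended continuously by G_μ(0)=1, G_μ(1)=0). Then α* := Φ(−μ/2) is the unique fixed point of G_μ, and sup_{α∈[0,1]} ((1−α) − G_μ(α))/√2 = (1 − 2Φ(−μ/2))/√2 = (2Φ(μ/2) − 1)/√2. Moreover, the map μ ↦ (2Φ(μ/2) − 1)/√2 is strictly increasing on (0,∞). -/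
open MeasureTheory Real

/-- The inverse `Φ⁻¹` of the standard normal CDF (on `(0,1)`). -/
noncomputable def stdNormalCDFInv : ℝ → ℝ :=
  Function.invFun stdNormalCDF

/-- The Gaussian trade-off function `G_μ(α) = Φ(Φ⁻¹(1−α) − μ)`, extended continuously by
`G_μ(0) = 1` and `G_μ(1) = 0`. -/
noncomputable def gaussianTradeOff (μ α : ℝ) : ℝ :=
  if α = 0 then 1 else if α = 1 then 0
  else stdNormalCDF (stdNormalCDFInv (1 - α) - μ)

lemma aux_pdf (t : ℝ) : Real.exp (-t ^ 2 / 2) / Real.sqrt (2 * Real.pi)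
    = ProbabilityTheory.gaussianPDFReal 0 1 t := by
  simp [ProbabilityTheory.gaussianPDFReal, div_eq_inv_mul]

lemma aux_integrable :
    Integrable (fun t : ℝ => Real.exp (-t ^ 2 / 2) / Real.sqrt (2 * Real.pi)) := by
  simp_rw [aux_pdf]
  exact ProbabilityTheory.integrable_gaussianPDFReal 0 1

lemma aux_continuous :
    Continuous (fun t : ℝ => Real.exp (-t ^ 2 / 2) / Real.sqrt (2 * Real.pi)) := by
  fun_prop

lemma aux_cdf : stdNormalCDF = ProbabilityTheory.cdf (ProbabilityTheory.gaussianReal 0 1) := by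
  funext x
  rw [ProbabilityTheory.cdf_eq_real, measureReal_def,
    ProbabilityTheory.gaussianReal_apply_eq_integral 0 one_ne_zero, ENNReal.toReal_ofReal]
  · unfold stdNormalCDF
    simp_rw [aux_pdf]
  · exact integral_nonneg fun t => ProbabilityTheory.gaussianPDFReal_nonneg 0 1 t

lemma aux_deriv (x : ℝ) :
    HasDerivAt stdNormalCDF (Real.exp (-x ^ 2 / 2) / Real.sqrt (2 * Real.pi)) x := by
  have h : stdNormalCDF = fun y => stdNormalCDF 0 +
      ∫ t in (0 : ℝ)..y, Real.exp (-t ^ 2 / 2) / Real.sqrt (2 * Real.pi) := by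
    funext y
    rw [← intervalIntegral.integral_Iic_sub_Iic aux_integrable.integrableOn
      aux_integrable.integrableOn]
    simp [stdNormalCDF]
  rw [h]
  exact (intervalIntegral.integral_hasDerivAt_right (aux_continuous.intervalIntegrable _ _)
    (aux_continuous.stronglyMeasurableAtFilter _ _) aux_continuous.continuousAt).const_add _

lemma aux_strictMono : StrictMono stdNormalCDF :=
  strictMono_of_deriv_pos fun x => by
    rw [(aux_deriv x).deriv]
    positivity

lemma aux_cont : Continuous stdNormalCDF :=
  continuous_iff_continuousAt.2 fun x => (aux_deriv x).continuousAt

lemma aux_neg (x : ℝ) : stdNormalCDF (-x) = 1 - stdNormalCDF x := by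
  have h1 : stdNormalCDF (-x)
      = ∫ t in Set.Ioi x, Real.exp (-t ^ 2 / 2) / Real.sqrt (2 * Real.pi) := by
    have := integral_comp_neg_Ioi x
      (fun t : ℝ => Real.exp (-t ^ 2 / 2) / Real.sqrt (2 * Real.pi))
    simpa [stdNormalCDF] using this.symm
  have h2 := intervalIntegral.integral_Iic_add_Ioi (b := x)
    aux_integrable.integrableOn aux_integrable.integrableOn
  have h3 : ∫ t : ℝ, Real.exp (-t ^ 2 / 2) / Real.sqrt (2 * Real.pi) = 1 := by
    simp_rw [aux_pdf]
    exact ProbabilityTheory.integral_gaussianPDFReal_eq_one 0 one_ne_zero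
  rw [h1]
  unfold stdNormalCDF
  linarith

lemma aux_pos (x : ℝ) : 0 < stdNormalCDF x := by
  have h : 0 ≤ stdNormalCDF (x - 1) := by
    rw [aux_cdf]; exact ProbabilityTheory.cdf_nonneg _ _
  exact h.trans_lt (aux_strictMono (by linarith))

lemma aux_lt_one (x : ℝ) : stdNormalCDF x < 1 := by
  have := aux_pos (-x)
  rw [aux_neg] at this
  linarith

lemma aux_surj {a : ℝ} (h0 : 0 < a) (h1 : a < 1) : ∃ x, stdNormalCDF x = a := by
  have hb := ProbabilityTheory.tendsto_cdf_atBot (ProbabilityTheory.gaussianReal 0 1)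
  have ht := ProbabilityTheory.tendsto_cdf_atTop (ProbabilityTheory.gaussianReal 0 1)
  rw [← aux_cdf] at hb ht
  obtain ⟨y, hy⟩ := (hb.eventually (gt_mem_nhds h0)).exists
  obtain ⟨z, hz⟩ := (ht.eventually (lt_mem_nhds h1)).exists
  exact mem_range_of_exists_le_of_exists_ge aux_cont ⟨y, hy.le⟩ ⟨z, hz.le⟩

lemma aux_inv (x : ℝ) : stdNormalCDFInv (stdNormalCDF x) = x :=
  Function.leftInverse_invFun aux_strictMono.injective x

lemma aux_tradeOff (μ x : ℝ) :
    gaussianTradeOff μ (1 - stdNormalCDF x) = stdNormalCDF (x - μ) := by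
  have h0 := aux_pos x
  have h1 := aux_lt_one x
  unfold gaussianTradeOff
  rw [if_neg (by linarith), if_neg (by linarith), sub_sub_cancel, aux_inv]

lemma aux_max (μ : ℝ) (hμ : 0 < μ) (x : ℝ) :
    stdNormalCDF x - stdNormalCDF (x - μ) ≤
      stdNormalCDF (μ / 2) - stdNormalCDF (μ / 2 - μ) := by
  have hd : ∀ y, HasDerivAt (fun y => stdNormalCDF y - stdNormalCDF (y - μ))
      (Real.exp (-y ^ 2 / 2) / Real.sqrt (2 * Real.pi)
        - Real.exp (-(y - μ) ^ 2 / 2) / Real.sqrt (2 * Real.pi)) y := fun y =>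
    (aux_deriv y).sub ((aux_deriv (y - μ)).comp_sub_const y μ)
  have hc : Continuous (fun y => stdNormalCDF y - stdNormalCDF (y - μ)) :=
    continuous_iff_continuousAt.2 fun y => (hd y).continuousAt
  rcases le_total x (μ / 2) with hx | hx
  · refine (monotoneOn_of_deriv_nonneg (convex_Iic (μ / 2)) hc.continuousOn
      (fun y _ => (hd y).differentiableAt.differentiableWithinAt) ?_) hx
      (Set.mem_Iic.2 le_rfl) hx
    intro y hy
    rw [interior_Iic, Set.mem_Iio] at hy
    rw [(hd y).deriv, sub_nonneg]
    gcongr ?_ / _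
    apply Real.exp_le_exp.2
    nlinarith
  · refine (antitoneOn_of_deriv_nonpos (convex_Ici (μ / 2)) hc.continuousOn
      (fun y _ => (hd y).differentiableAt.differentiableWithinAt) ?_)
      (Set.mem_Ici.2 le_rfl) hx hx
    intro y hy
    rw [interior_Ici, Set.mem_Ioi] at hy
    rw [(hd y).deriv, sub_nonpos]
    gcongr ?_ / _
    apply Real.exp_le_exp.2
    nlinarith

/-- Lemma E.1: for `μ > 0`, `α* = Φ(−μ/2)` is the unique fixed point
of the Gaussian trade-off function `G_μ` on `[0,1]`, the separation
`sup_{α∈[0,1]} ((1−α) − G_μ(α))/√2` equals `(1 − 2Φ(−μ/2))/√2 = (2Φ(μ/2) − 1)/√2`, and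
`μ ↦ (2Φ(μ/2) − 1)/√2` is strictly increasing on `(0,∞)`. -/
theorem gaussian_tradeoff_separation
    (μ : ℝ) (hμ : 0 < μ) :
    gaussianTradeOff μ (stdNormalCDF (-(μ / 2))) = stdNormalCDF (-(μ / 2)) ∧
    (∀ α ∈ Set.Icc (0 : ℝ) 1, gaussianTradeOff μ α = α → α = stdNormalCDF (-(μ / 2))) ∧
    sSup ((fun α => ((1 - α) - gaussianTradeOff μ α) / Real.sqrt 2) '' Set.Icc 0 1)
      = (1 - 2 * stdNormalCDF (-(μ / 2))) / Real.sqrt 2 ∧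
    (1 - 2 * stdNormalCDF (-(μ / 2))) / Real.sqrt 2
      = (2 * stdNormalCDF (μ / 2) - 1) / Real.sqrt 2 ∧
    StrictMonoOn (fun m : ℝ => (2 * stdNormalCDF (m / 2) - 1) / Real.sqrt 2)
      (Set.Ioi (0 : ℝ)) := by
  have hn := aux_neg (μ / 2)
  have hfix : gaussianTradeOff μ (stdNormalCDF (-(μ / 2))) = stdNormalCDF (-(μ / 2)) := by
    conv_lhs => rw [hn, aux_tradeOff]
    congr 1
    ring
  have hcase : ∀ α ∈ Set.Icc (0 : ℝ) 1, α = 0 ∨ α = 1 ∨ ∃ x, α = 1 - stdNormalCDF x := by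
    rintro α ⟨h0, h1⟩
    rcases h0.eq_or_lt with h | h
    · exact Or.inl h.symm
    rcases h1.eq_or_lt with h' | h'
    · exact Or.inr (Or.inl h')
    obtain ⟨x, hx⟩ := aux_surj (a := 1 - α) (by linarith) (by linarith)
    exact Or.inr (Or.inr ⟨x, by linarith⟩)
  have hG0 : gaussianTradeOff μ 0 = 1 := by simp [gaussianTradeOff]
  have hG1 : gaussianTradeOff μ 1 = 0 := by simp [gaussianTradeOff]
  refine ⟨hfix, ?_, ?_, ?_, ?_⟩
  · intro α hα h
    rcases hcase α hα with rfl | rfl | ⟨x, rfl⟩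
    · rw [hG0] at h; norm_num at h
    · rw [hG1] at h; norm_num at h
    · rw [aux_tradeOff, ← aux_neg] at h
      have := aux_strictMono.injective h
      rw [← aux_neg]
      congr 1
      linarith
  · apply IsGreatest.csSup_eq
    constructor
    · refine ⟨stdNormalCDF (-(μ / 2)), ⟨(aux_pos _).le, (aux_lt_one _).le⟩, ?_⟩
      simp only [hfix]
      ring
    · rintro _ ⟨α, hα, rfl⟩
      have hlt : stdNormalCDF (-(μ / 2)) < stdNormalCDF (μ / 2) :=
        aux_strictMono (by linarith)
      refine div_le_div_of_nonneg_right ?_ (Real.sqrt_nonneg 2)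
      rcases hcase α hα with rfl | rfl | ⟨x, rfl⟩
      · rw [hG0]; linarith
      · rw [hG1]; linarith
      · rw [aux_tradeOff]
        have h := aux_max μ hμ x
        rw [show μ / 2 - μ = -(μ / 2) by ring] at h
        linarith
  · rw [hn]
    ring
  · intro a _ b _ hab
    have h : stdNormalCDF (a / 2) < stdNormalCDF (b / 2) := aux_strictMono (by linarith)
    exact div_lt_div_of_pos_right (by linarith) (by positivity)
end
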